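/- There is no group homomorphism θ : GL_3(Z_3) → GL_3(Z_9) such that the composition of θ with the group homomorphism GL_3(Z_9) → GL_3(Z_3) induced by reduction modulo 3 is the identity on GL_3(Z_3). -/

import Mathlib

/-!
Already the elementary abelian group of order 9 consisting of the transvections `1 + u ⊗ v`, where
`v` is the third coordinate functional and `u = (c, d, 0)` lies in its kernel, has no lift.

Let `M_u = 1 + u ⊗ v + 3 A_u` be lifts. Expanding modulo 9,
`M_u ^ 3 = 1 + (3 + 3 v(A_u u)) u ⊗ v`, so `M_u ^ 3 = 1` forces `v(A_u u) = -1` for all `u ≠ 0`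
(`cube_relation`). On the other hand multiplicativity makes `u ↦ v ∘ A_u` additive on `ker v`
(`bottom_row_mul`), so `u ↦ v(A_u u)` is a quadratic form on `𝔽₃²`. A quadratic form `q` with
constant value `-1` off `0` would violate the parallelogram identity
`q(u + w) + q(u - w) = 2 (q(u) + q(w))` for independent `u`, `w`.
-/

/-- The transvection `1 + u ⊗ v` of `𝔽₃³` with `u = (c, d, 0)` and `v` the third coordinate. -/
def transv (c d : ZMod 3) : (Matrix (Fin 3) (Fin 3) (ZMod 3))ˣ where
  val := !![1, 0, c; 0, 1, d; 0, 0, 1]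
  inv := !![1, 0, -c; 0, 1, -d; 0, 0, 1]
  val_inv := by revert c d; decide
  inv_val := by revert c d; decide

lemma transv_mul (c d c' d' : ZMod 3) :
    transv c d * transv c' d' = transv (c + c') (d + d') := by
  ext1
  revert c d c' d'
  decide

lemma transv_cube (c d : ZMod 3) : transv c d ^ 3 = 1 := by
  ext1
  revert c d
  decide

/-- `M` is congruent modulo `3R` to `1 + u ⊗ v` with `u = (c, d, 0)` and `v` the third coordinate.
Only `R = ℤ/9` is used; the lemmas below need no more than `9 = 0` in `R`. -/
def IsLift {R : Type*} [CommRing R] (c d : R) (M : Matrix (Fin 3) (Fin 3) R) : Prop :=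
  ∃ A : Matrix (Fin 3) (Fin 3) R, M = !![1, 0, c; 0, 1, d; 0, 0, 1] + (3 : R) • A

lemma exists_of_cast_eq : ∀ x y : ZMod 9,
    ZMod.castHom (by norm_num : (3 : ℕ) ∣ 9) (ZMod 3) x =
      ZMod.castHom (by norm_num : (3 : ℕ) ∣ 9) (ZMod 3) y → ∃ a, x = y + 3 * a := by
  decide

lemma nine_eq_zero : (9 : ZMod 9) = 0 := by decide

/-- The off-diagonal entries of the bottom row are additive on lifts of the transvections. -/
lemma bottom_row_mul {R : Type*} [CommRing R] (h9 : (9 : R) = 0) {c d c' d' : R}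
    {M N : Matrix (Fin 3) (Fin 3) R}
    (hM : IsLift c d M) (hN : IsLift c' d' N) :
    (M * N) 2 0 = M 2 0 + N 2 0 ∧ (M * N) 2 1 = M 2 1 + N 2 1 := by
  obtain ⟨A, rfl⟩ := hM
  obtain ⟨B, rfl⟩ := hN
  simp only [Matrix.mul_apply, Fin.sum_univ_three]
  simp
  constructor
  · linear_combination
      (A 2 0 * B 0 0 + A 2 1 * B 1 0 + A 2 2 * B 2 0) * h9
  · linear_combination
      (A 2 0 * B 0 1 + A 2 1 * B 1 1 + A 2 2 * B 2 1) * h9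

/-- The `u ⊗ v` component of `M ^ 3 = 1`: with `M = 1 + u ⊗ v + 3 A` it reads
`(3 + v(3 A u)) u = 0`, and `3 A` has the off-diagonal bottom entries of `M`. -/
lemma cube_relation {R : Type*} [CommRing R] (h9 : (9 : R) = 0) {c d : R}
    {M : Matrix (Fin 3) (Fin 3) R}
    (hM : IsLift c d M) (h : M ^ 3 = 1) :
    c * (3 + c * M 2 0 + d * M 2 1) = 0 ∧ d * (3 + c * M 2 0 + d * M 2 1) = 0 := by
  obtain ⟨A, rfl⟩ := hM
  have h0 := congrFun (congrFun h 0) 2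
  have h1 := congrFun (congrFun h 1) 2
  simp only [pow_succ, pow_zero, one_mul, Matrix.mul_apply, Fin.sum_univ_three] at h0 h1
  simp at h0 h1 ⊢
  constructor
  · clear h1
    grind
  · clear h0
    grind

/-- There is no group homomorphism `θ : GL₃(ℤ/3) → GL₃(ℤ/9)` such that
composing `θ` with the reduction-mod-3 map `GL₃(ℤ/9) → GL₃(ℤ/3)` is the identity. -/
theorem no_section_GL3_Z9 :
    ¬ ∃ θ : (Matrix (Fin 3) (Fin 3) (ZMod 3))ˣ →* (Matrix (Fin 3) (Fin 3) (ZMod 9))ˣ,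
      ∀ g, Units.map ((ZMod.castHom (by norm_num : (3 : ℕ) ∣ 9)
          (ZMod 3)).mapMatrix (m := Fin 3)).toMonoidHom (θ g) = g := by
  rintro ⟨θ, hθ⟩
  have lift (c d : ZMod 9) : IsLift c d (θ (transv (ZMod.castHom (by norm_num : (3 : ℕ) ∣ 9) _ c)
      (ZMod.castHom (by norm_num : (3 : ℕ) ∣ 9) _ d))).val := by
    have key := hθ (transv (ZMod.castHom (by norm_num : (3 : ℕ) ∣ 9) _ c)
      (ZMod.castHom (by norm_num : (3 : ℕ) ∣ 9) _ d))
    generalize θ _ = X at key ⊢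
    have hex (i j) : ∃ a, X.val i j =
        (!![1, 0, c; 0, 1, d; 0, 0, 1] : Matrix (Fin 3) (Fin 3) (ZMod 9)) i j + 3 * a := by
      apply exists_of_cast_eq
      have := congrArg (fun g => g.val i j) key
      refine Eq.trans this ?_
      fin_cases i <;> fin_cases j <;> simp [transv]
    choose A hA using hex
    exact ⟨A, by ext i j; rw [hA]; rfl⟩
  have cube (c d : ZMod 3) : (θ (transv c d)).val ^ 3 = 1 := by
    rw [← Units.val_pow_eq_pow_val, ← map_pow, transv_cube, map_one, Units.val_one]
  have mul (c d c' d' : ZMod 3) :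
      (θ (transv (c + c') (d + d'))).val = (θ (transv c d)).val * (θ (transv c' d')).val := by
    rw [← transv_mul, map_mul, Units.val_mul]
  have lx : IsLift 1 0 (θ (transv 1 0)).val := by simpa using lift 1 0
  have ly : IsLift 0 1 (θ (transv 0 1)).val := by simpa using lift 0 1
  have lxy : IsLift 1 1 (θ (transv 1 1)).val := by simpa using lift 1 1
  have lxyy : IsLift 1 2 (θ (transv 1 2)).val := by
    have h2 : ZMod.castHom (by norm_num : (3 : ℕ) ∣ 9) (ZMod 3) 2 = 2 := map_ofNat _ 2
    simpa only [map_one, h2] using lift 1 2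
  have exy : (θ (transv 1 1)).val = (θ (transv 1 0)).val * (θ (transv 0 1)).val := mul 1 0 0 1
  have exyy : (θ (transv 1 2)).val = (θ (transv 1 1)).val * (θ (transv 0 1)).val := mul 1 1 0 1
  have qx := (cube_relation nine_eq_zero lx (cube _ _)).1
  have qy := (cube_relation nine_eq_zero ly (cube _ _)).2
  have qxy := (cube_relation nine_eq_zero lxy (cube _ _)).1
  have qxyy := (cube_relation nine_eq_zero lxyy (cube _ _)).1
  obtain ⟨r0, r1⟩ := bottom_row_mul nine_eq_zero lx ly
  obtain ⟨s0, s1⟩ := bottom_row_mul nine_eq_zero lxy ly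
  rw [← exy] at r0 r1
  rw [← exyy] at s0 s1
  -- The values of `v(A_u u)` at `(1, 0)`, `(0, 1)`, `(1, 1)` give `X 2 1 + Y 2 0 = 3` for the lifts
  -- `X`, `Y` of the first two transvections; the value at `(1, 2)` gives `2 * 3 = 3`.
  have contra : (3 : ZMod 9) = 0 := by
    have h9 := nine_eq_zero
    grind
  exact absurd contra (by decide)
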